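/- Let C be a category with pullbacks which has Kähler differentials, and let X be an object of C. Then X is formally unramified if and only if Ω_X is a zero object in Ab(C/X). -/

import Mathlib

open CategoryTheory CategoryTheory.Limits

universe v u

/-- A Beck module over `Y`: an abelian group object in the overcategory `C/Y`,
presented by its underlying morphism `φ : M ⟶ Y`, a unit (zero) section `unit`,
an addition `add` over `Y`, and a negation `neg` over `Y`, satisfying the abelian
group axioms on generalized elements (equivalently, via Yoneda, making it an
abelian group object of `C/Y`). -/
structure BeckModule {C : Type u} [Category.{v} C] [HasPullbacks C] (Y : C) where
  M : C
  φ : M ⟶ Y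
  unit : Y ⟶ M
  unit_φ : unit ≫ φ = 𝟙 Y
  add : pullback φ φ ⟶ M
  add_φ : add ≫ φ = pullback.fst φ φ ≫ φ
  neg : M ⟶ M
  neg_φ : neg ≫ φ = φ
  add_assoc : ∀ {T : C} (a b c : T ⟶ M) (hab : a ≫ φ = b ≫ φ) (hbc : b ≫ φ = c ≫ φ),
    pullback.lift (pullback.lift a b hab ≫ add) c
        (by rw [Category.assoc, add_φ, ← Category.assoc, pullback.lift_fst, hab, hbc]) ≫ add =
      pullback.lift a (pullback.lift b c hbc ≫ add)
        (by rw [Category.assoc, add_φ, ← Category.assoc, pullback.lift_fst, hab]) ≫ add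
  add_comm : ∀ {T : C} (a b : T ⟶ M) (h : a ≫ φ = b ≫ φ),
    pullback.lift a b h ≫ add = pullback.lift b a h.symm ≫ add
  zero_add : ∀ {T : C} (a : T ⟶ M),
    pullback.lift (a ≫ φ ≫ unit) a
        (by rw [Category.assoc, Category.assoc, unit_φ, Category.comp_id]) ≫ add = a
  add_neg : ∀ {T : C} (a : T ⟶ M),
    pullback.lift a (a ≫ neg) (by rw [Category.assoc, neg_φ]) ≫ add = a ≫ φ ≫ unit

/-- A Beck torsor structure on `γ : Z ⟶ Y`: `γ` is an effective epimorphism, equipped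
with a Beck module `mod` over `Y` and a group action `τ : M ×_Y Z ⟶ Z` in `C/Y`
(satisfying the unit and associativity axioms for an action of the group object `M`),
such that the shear morphism `(τ, π_Z) : M ×_Y Z ⟶ Z ×_Y Z` is an isomorphism in `C/Y`. -/
structure BeckTorsor {C : Type u} [Category.{v} C] [HasPullbacks C] {Z Y : C} (γ : Z ⟶ Y) where
  mod : BeckModule Y
  effEpi : EffectiveEpi γ
  τ : pullback mod.φ γ ⟶ Z
  τ_γ : τ ≫ γ = pullback.snd mod.φ γ ≫ γ
  act_unit : ∀ {T : C} (z : T ⟶ Z),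
    pullback.lift (z ≫ γ ≫ mod.unit) z
        (by rw [Category.assoc, Category.assoc, mod.unit_φ, Category.comp_id]) ≫ τ = z
  act_assoc : ∀ {T : C} (a b : T ⟶ mod.M) (z : T ⟶ Z)
      (hab : a ≫ mod.φ = b ≫ mod.φ) (hbz : b ≫ mod.φ = z ≫ γ),
    pullback.lift (pullback.lift a b hab ≫ mod.add) z
        (by rw [Category.assoc, mod.add_φ, ← Category.assoc, pullback.lift_fst, hab, hbz]) ≫ τ =
      pullback.lift a (pullback.lift b z hbz ≫ τ)
        (by rw [Category.assoc, τ_γ, ← Category.assoc, pullback.lift_snd, hab, hbz]) ≫ τ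
  shear_iso : IsIso (pullback.lift τ (pullback.snd mod.φ γ) τ_γ :
    pullback mod.φ γ ⟶ pullback γ γ)

/-- An object `X` is formally unramified if, for every Beck torsor `γ : Z ⟶ Y` in `C`,
the canonical map `Hom(X, Z) → Hom(X, Y)` given by composition with `γ` is injective. -/
def FormallyUnramified {C : Type u} [Category.{v} C] [HasPullbacks C] (X : C) : Prop :=
  ∀ ⦃Z Y : C⦄ (γ : Z ⟶ Y), BeckTorsor γ →
    Function.Injective (fun ψ : X ⟶ Z => ψ ≫ γ)

/-- A morphism of Beck modules over `Y`: a morphism over `Y` commuting with the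
addition (i.e. a morphism of abelian group objects in `C/Y`). -/
@[ext]
structure BeckModuleHom {C : Type u} [Category.{v} C] [HasPullbacks C] {Y : C}
    (N₁ N₂ : BeckModule Y) where
  f : N₁.M ⟶ N₂.M
  w : f ≫ N₂.φ = N₁.φ
  map_add : ∀ {T : C} (a b : T ⟶ N₁.M) (h : a ≫ N₁.φ = b ≫ N₁.φ),
    (pullback.lift a b h ≫ N₁.add) ≫ f =
      pullback.lift (a ≫ f) (b ≫ f)
        (by rw [Category.assoc, Category.assoc, w, h]) ≫ N₂.add

/-- The category `Ab(C/Y)` of Beck modules over `Y`. -/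
instance BeckModule.category {C : Type u} [Category.{v} C] [HasPullbacks C] (Y : C) :
    Category (BeckModule Y) where
  Hom := BeckModuleHom
  id N := ⟨𝟙 N.M, Category.id_comp _, by intro T a b h; simp⟩
  comp {N₁ N₂ N₃} f g := ⟨f.f ≫ g.f, by rw [Category.assoc, g.w, f.w], by
    intro T a b h
    rw [← Category.assoc, f.map_add, g.map_add]
    simp⟩
  id_comp f := by apply BeckModuleHom.ext; simp
  comp_id f := by apply BeckModuleHom.ext; simp
  assoc f g h := by apply BeckModuleHom.ext; simp

/-- The forgetful functor `Ab(C/Y) ⥤ C/Y`. -/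
def forgetBeck {C : Type u} [Category.{v} C] [HasPullbacks C] (Y : C) :
    BeckModule Y ⥤ Over Y where
  obj N := Over.mk N.φ
  map {N₁ N₂} f := Over.homMk f.f f.w
  map_id N := by ext; simp; rfl
  map_comp f g := by ext; simp; rfl

attribute [local simp] pullback.lift_fst pullback.lift_snd pullback.lift_fst_assoc
  pullback.lift_snd_assoc

/-- Pullback of a Beck module along a morphism. -/
noncomputable def BeckModule.pull {C : Type u} [Category.{v} C] [HasPullbacks C] {X Y : C}
    (N : BeckModule Y) (f : X ⟶ Y) : BeckModule X :=
  let A : pullback (pullback.snd N.φ f) (pullback.snd N.φ f) ⟶ pullback N.φ f :=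
    pullback.lift
      (pullback.lift (pullback.fst _ _ ≫ pullback.fst _ _) (pullback.snd _ _ ≫ pullback.fst _ _)
        (by rw [Category.assoc, Category.assoc, pullback.condition, ← Category.assoc,
              pullback.condition, Category.assoc]) ≫ N.add)
      (pullback.fst _ _ ≫ pullback.snd _ _)
      (by rw [Category.assoc, N.add_φ, ← Category.assoc, pullback.lift_fst, Category.assoc,
            pullback.condition, Category.assoc])
  have A1 : ∀ {T : C} (a b : T ⟶ pullback N.φ f)
      (h : a ≫ pullback.snd N.φ f = b ≫ pullback.snd N.φ f),
      pullback.lift a b h ≫ A ≫ pullback.fst _ _ =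
        pullback.lift (a ≫ pullback.fst _ _) (b ≫ pullback.fst _ _)
          (by rw [Category.assoc, Category.assoc, pullback.condition, ← Category.assoc, h,
                Category.assoc]) ≫ N.add := by
    intro T a b h
    simp only [A, pullback.lift_fst]
    rw [← Category.assoc]
    congr 1
    apply pullback.hom_ext <;> simp
  have A2 : ∀ {T : C} (a b : T ⟶ pullback N.φ f)
      (h : a ≫ pullback.snd N.φ f = b ≫ pullback.snd N.φ f),
      pullback.lift a b h ≫ A ≫ pullback.snd _ _ = a ≫ pullback.snd _ _ := by
    intro T a b h
    simp [A]
  { M := pullback N.φ f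
    φ := pullback.snd N.φ f
    unit := pullback.lift (f ≫ N.unit) (𝟙 X) (by simp [N.unit_φ])
    unit_φ := by simp
    add := A
    add_φ := by simp [A]
    neg := pullback.lift (pullback.fst _ _ ≫ N.neg) (pullback.snd _ _)
      (by simp [N.neg_φ, pullback.condition])
    neg_φ := by simp
    add_assoc := by
      intro T a b c hab hbc
      apply pullback.hom_ext
      · simp only [Category.assoc, A1]
        exact N.add_assoc _ _ _ _ _
      · simp only [Category.assoc, A2]
    add_comm := by
      intro T a b h
      apply pullback.hom_ext
      · simp only [Category.assoc, A1]
        exact N.add_comm _ _ _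
      · simp only [Category.assoc, A2, h]
    zero_add := by
      intro T a
      apply pullback.hom_ext
      · have := N.zero_add (a ≫ pullback.fst _ _)
        simp only [Category.assoc, A1, pullback.lift_fst]
        simpa only [Category.assoc, pullback.condition_assoc] using this
      · simp only [Category.assoc, A2]
        simp
    add_neg := by
      intro T a
      apply pullback.hom_ext
      · have := N.add_neg (a ≫ pullback.fst _ _)
        simp only [Category.assoc, A1, pullback.lift_fst]
        simpa only [Category.assoc, pullback.condition_assoc] using this
      · simp only [Category.assoc, A2]
        simp }

/-- The zero morphism of Beck modules. -/
def BeckModule.zeroHom {C : Type u} [Category.{v} C] [HasPullbacks C] {Y : C}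
    (N₁ N₂ : BeckModule Y) : N₁ ⟶ N₂ :=
  BeckModuleHom.mk (N₁.φ ≫ N₂.unit) (by rw [Category.assoc, N₂.unit_φ, Category.comp_id]) (by
    intro T a b h
    have := N₂.zero_add (a ≫ N₁.φ ≫ N₂.unit)
    simp only [Category.assoc, reassoc_of% N₂.unit_φ] at this
    have h' : b ≫ N₁.φ ≫ N₂.unit = a ≫ N₁.φ ≫ N₂.unit := by
      rw [← Category.assoc, ← h, Category.assoc]
    simp only [h', this]
    simp [reassoc_of% N₁.add_φ])

/-- A Beck module is a torsor over itself. -/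
noncomputable def BeckModule.torsor {C : Type u} [Category.{v} C] [HasPullbacks C] {Y : C}
    (N : BeckModule Y) : BeckTorsor N.φ where
  mod := N
  effEpi := by
    have : IsSplitEpi N.φ := ⟨⟨⟨N.unit, N.unit_φ⟩⟩⟩
    infer_instance
  τ := N.add
  τ_γ := by rw [N.add_φ, pullback.condition]
  act_unit := N.zero_add
  act_assoc := N.add_assoc
  shear_iso := by
    have add_zero : ∀ {T : C} (a : T ⟶ N.M), pullback.lift a (a ≫ N.φ ≫ N.unit)
        (by simp [N.unit_φ]) ≫ N.add = a := by
      intro T a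
      rw [N.add_comm, N.zero_add]
    have neg_add : ∀ {T : C} (a : T ⟶ N.M), pullback.lift (a ≫ N.neg) a
        (by simp [N.neg_φ]) ≫ N.add = a ≫ N.φ ≫ N.unit := by
      intro T a
      rw [N.add_comm, N.add_neg]
    refine ⟨pullback.lift (pullback.lift (pullback.fst _ _) (pullback.snd _ _ ≫ N.neg)
      (by simp [N.neg_φ, pullback.condition]) ≫ N.add) (pullback.snd _ _)
      (by simp [N.add_φ, N.neg_φ, pullback.condition]), ?_, ?_⟩
    · apply pullback.hom_ext
      · have h1 := N.add_assoc (pullback.fst N.φ N.φ) (pullback.snd N.φ N.φ)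
          (pullback.snd N.φ N.φ ≫ N.neg) pullback.condition (by simp [N.neg_φ])
        simp only [N.add_neg] at h1
        have h2 := add_zero (pullback.fst N.φ N.φ)
        simp only [pullback.condition_assoc] at h2
        rw [h2] at h1
        simp only [Category.assoc, pullback.lift_fst, Category.id_comp]
        refine Eq.trans ?_ h1
        rw [← Category.assoc]
        congr 1
        apply pullback.hom_ext
        · simp only [Category.assoc, pullback.lift_fst]
          symm
          conv_rhs => rw [← Category.id_comp N.add]
          congr 1
          apply pullback.hom_ext <;> simp
        · simp
      · simp
    · apply pullback.hom_ext
      · have h1 := N.add_assoc (pullback.fst N.φ N.φ) 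
          (pullback.snd N.φ N.φ ≫ N.neg) (pullback.snd N.φ N.φ) 
          (by simp [N.neg_φ, pullback.condition]) (by simp [N.neg_φ])
        simp only [neg_add] at h1
        have h2 := add_zero (pullback.fst N.φ N.φ)
        simp only [pullback.condition_assoc] at h2
        rw [h2] at h1
        simp only [Category.assoc, pullback.lift_fst, Category.id_comp]
        exact h1
      · simp

/-- Main theorem: if `C` has Kähler differentials, then an object `X` of `C` is
formally unramified if and only if `Ω_X = Ω(𝟙 X)` is a zero object in `Ab(C/X)`. -/
theorem formallyUnramified_iff_isZero_kaehler {C : Type u} [Category.{v} C]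
    [HasPullbacks C] (Ω : ∀ Y : C, Over Y ⥤ BeckModule Y)
    (adj : ∀ Y : C, Ω Y ⊣ forgetBeck Y) (X : C) :
    FormallyUnramified X ↔ IsZero ((Ω X).obj (Over.mk (𝟙 X))) := by
  constructor
  · intro hX
    have hs : ∀ (N : BeckModule X), Subsingleton ((Ω X).obj (Over.mk (𝟙 X)) ⟶ N) := by
      intro N
      refine ⟨fun a b => ?_⟩
      apply ((adj X).homEquiv _ _).injective
      ext
      apply hX N.φ N.torsor
      exact (Over.w ((adj X).homEquiv _ _ a)).trans (Over.w ((adj X).homEquiv _ _ b)).symm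
    refine ⟨fun N => ⟨⟨⟨BeckModule.zeroHom _ _⟩, fun a => (hs N).elim _ _⟩⟩,
      fun N => ⟨⟨⟨BeckModule.zeroHom _ _⟩, fun g => ?_⟩⟩⟩
    have h0 := (hs _).elim (𝟙 ((Ω X).obj (Over.mk (𝟙 X)))) (BeckModule.zeroHom _ _)
    rw [← Category.comp_id g, h0]
    apply BeckModuleHom.ext
    change g.f ≫ _ ≫ _ = _ ≫ _
    rw [← Category.assoc, g.w]
  · intro hZ Z Y γ t ψ₁ ψ₂ h
    have h : ψ₁ ≫ γ = ψ₂ ≫ γ := h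
    have := t.shear_iso
    let S : pullback t.mod.φ γ ⟶ pullback γ γ :=
      pullback.lift t.τ (pullback.snd t.mod.φ γ) t.τ_γ
    have : IsIso S := t.shear_iso
    let k : X ⟶ pullback t.mod.φ γ := pullback.lift ψ₁ ψ₂ h ≫ inv S
    have hk : k ≫ S = pullback.lift ψ₁ ψ₂ h := by simp [k]
    have k1 : k ≫ t.τ = ψ₁ := by
      have := congrArg (· ≫ pullback.fst _ _) hk
      simpa [S] using this
    have k2 : k ≫ pullback.snd _ _ = ψ₂ := by
      have := congrArg (· ≫ pullback.snd _ _) hk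
      simpa [S] using this
    let f := ψ₂ ≫ γ
    have hm : (k ≫ pullback.fst _ _) ≫ t.mod.φ = 𝟙 X ≫ f := by
      simp only [f, ← k2, Category.assoc, pullback.condition, Category.id_comp]
    let P := t.mod.pull f
    let s₁ : Over.mk (𝟙 X) ⟶ (forgetBeck X).obj P :=
      Over.homMk (pullback.lift (k ≫ pullback.fst _ _) (𝟙 X) hm) (pullback.lift_snd _ _ _)
    let s₂ : Over.mk (𝟙 X) ⟶ (forgetBeck X).obj P :=
      Over.homMk P.unit P.unit_φ
    have hs : s₁ = s₂ := by
      apply ((adj X).homEquiv _ _).symm.injective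
      exact hZ.eq_of_src _ _
    have hl : pullback.lift (k ≫ pullback.fst _ _) (𝟙 X) hm =
      pullback.lift (f ≫ t.mod.unit) (𝟙 X) (by simp [t.mod.unit_φ]) := congrArg (·.left) hs
    have hu : k ≫ pullback.fst _ _ = f ≫ t.mod.unit := by
      have := congrArg (· ≫ pullback.fst _ _) hl
      simpa using this
    rw [← k1, ← t.act_unit ψ₂]
    congr 1
    apply pullback.hom_ext
    · simp [hu, f]
    · simp [k2]
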